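/- Let Σ be a p×p symmetric positive semi-definite matrix with largest eigenvalue σ₁ of multiplicity 1 and second largest eigenvalue σ₂ < σ₁, and let θ₁ be a unit eigenvector for σ₁. Then for every unit vector θ ∈ ℝ^p, (1/2)(σ₁ − σ₂)‖θθᵀ − θ₁θ₁ᵀ‖_F² ≤ ⟨Σ, θ₁θ₁ᵀ − θθᵀ⟩, where ⟨A,B⟩ = tr(AᵀB) and ‖·‖_F is the Frobenius norm. -/

import Mathlib

/-!
Both sides are functions of `c = ⟨θ, θ₁⟩` and of the quadratic form `θᵀSθ`: the squared Frobenius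
distance is `2(1 - c²)` (`sum_sq_vecMulVec_sub`), and the right-hand side is `σ₁ - θᵀSθ`
(`sum_mul_vecMulVec`). The component `x = θ - cθ₁` is orthogonal to the eigenvector `θ₁`, so
`xᵀSx = θᵀSθ - c²σ₁` while `‖x‖² = 1 - c²`; the bound `xᵀSx ≤ σ₂‖x‖²` on the orthogonal complement
is then exactly the inequality `(σ₁ - σ₂)(1 - c²) ≤ σ₁ - θᵀSθ`.
-/

open Matrix

lemma sum_mul_vecMulVec {p : ℕ} (S : Matrix (Fin p) (Fin p) ℝ) (a : Fin p → ℝ) :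
    ∑ i, ∑ j, S i j * vecMulVec a a i j = a ⬝ᵥ S.mulVec a := by
  simp only [dotProduct, mulVec, vecMulVec_apply, Finset.mul_sum]
  exact Finset.sum_congr rfl fun i _ => Finset.sum_congr rfl fun j _ => by ring

lemma sum_sq_vecMulVec_sub {p : ℕ} (a b : Fin p → ℝ) :
    ∑ i, ∑ j, ((vecMulVec a a - vecMulVec b b) i j) ^ 2
      = (a ⬝ᵥ a) ^ 2 - 2 * (a ⬝ᵥ b) ^ 2 + (b ⬝ᵥ b) ^ 2 := by
  rw [sq (a ⬝ᵥ a), sq (a ⬝ᵥ b), sq (b ⬝ᵥ b)]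
  simp only [dotProduct, Finset.sum_mul_sum]
  simp only [Finset.mul_sum,
    ← Finset.sum_sub_distrib, ← Finset.sum_add_distrib, Matrix.sub_apply, vecMulVec_apply]
  exact Finset.sum_congr rfl fun i _ => Finset.sum_congr rfl fun j _ => by ring

/-- Curvature lemma: if `Σ` is symmetric PSD with top eigenvalue `σ₁` of multiplicity 1
(unit eigenvector `θ₁`) and all other eigenvalues at most `σ₂ < σ₁`, then for every unit
vector `θ`, `(1/2)(σ₁ − σ₂)‖θθᵀ − θ₁θ₁ᵀ‖_F² ≤ ⟨Σ, θ₁θ₁ᵀ − θθᵀ⟩`. -/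
theorem curvature_lemma (p : ℕ) (S : Matrix (Fin p) (Fin p) ℝ) (σ₁ σ₂ : ℝ)
    (θ₁ : Fin p → ℝ)
    (hsym : S.IsSymm)
    (hpsd : ∀ x : Fin p → ℝ, 0 ≤ x ⬝ᵥ S.mulVec x)
    (hθ₁ : ∑ j, (θ₁ j) ^ 2 = 1)
    (heig : S.mulVec θ₁ = σ₁ • θ₁)
    (hσ : σ₂ < σ₁)
    (hrest : ∀ x : Fin p → ℝ, x ⬝ᵥ θ₁ = 0 → x ⬝ᵥ S.mulVec x ≤ σ₂ * (x ⬝ᵥ x))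
    (θ : Fin p → ℝ) (hθ : ∑ j, (θ j) ^ 2 = 1) :
    (1 / 2) * (σ₁ - σ₂) *
        (∑ i, ∑ j, ((Matrix.vecMulVec θ θ - Matrix.vecMulVec θ₁ θ₁) i j) ^ 2)
      ≤ ∑ i, ∑ j, S i j * ((Matrix.vecMulVec θ₁ θ₁ - Matrix.vecMulVec θ θ) i j) := by
  have h₁ : θ₁ ⬝ᵥ θ₁ = 1 := by simpa only [dotProduct, sq] using hθ₁
  have h : θ ⬝ᵥ θ = 1 := by simpa only [dotProduct, sq] using hθ
  have hF := sum_sq_vecMulVec_sub θ θ₁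
  have hR : ∑ i, ∑ j, S i j * ((vecMulVec θ₁ θ₁ - vecMulVec θ θ) i j)
      = σ₁ - θ ⬝ᵥ S.mulVec θ := by
    simp only [Matrix.sub_apply, mul_sub, Finset.sum_sub_distrib, sum_mul_vecMulVec]
    rw [heig, dotProduct_smul, h₁, smul_eq_mul, mul_one]
  have hsw : θ₁ ⬝ᵥ S.mulVec θ = σ₁ * (θ ⬝ᵥ θ₁) := by
    rw [dotProduct_mulVec, ← mulVec_transpose, hsym.eq, heig, smul_dotProduct, smul_eq_mul,
      dotProduct_comm]
  have hcomm : θ₁ ⬝ᵥ θ = θ ⬝ᵥ θ₁ := dotProduct_comm _ _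
  have key := hrest (θ - (θ ⬝ᵥ θ₁) • θ₁) (by
    rw [sub_dotProduct, smul_dotProduct, h₁, smul_eq_mul, mul_one, sub_self])
  simp only [mulVec_sub, mulVec_smul, sub_dotProduct, dotProduct_sub, smul_dotProduct,
    dotProduct_smul, smul_eq_mul, heig, hsw, hcomm, h, h₁] at key
  rw [hF, hR, h, h₁]
  linarith
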